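/- For any Boolean function f: {-1,1}^n → {0,1} with W¹(f) > 0, there exists a halfspace g (of the form g(x) = 1{∑ f̂({i}) x_i > t} for some t ∈ ℝ) such that Cov(f,g) ≥ c·√(W¹(f) / log(e/W¹(f))), where c > 0 is an absolute constant. -/

import Mathlib

open Finset

noncomputable section
open scoped Classical

/-- The ±1 value associated to a Boolean bit. -/
def sgn1 (b : Bool) : ℝ := if b then 1 else -1

/-- Probability of an event under the uniform measure on `{-1,1}^n`. -/
def cubePr (n : ℕ) (P : (Fin n → Bool) → Prop) : ℝ :=
  ((univ.filter P).card : ℝ) / 2 ^ n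

/-- Expectation of a function under the uniform measure on `{-1,1}^n`. -/
def cubeE (n : ℕ) (f : (Fin n → Bool) → ℝ) : ℝ := (∑ x, f x) / 2 ^ n

/-- The linear form `a · x = ∑ aᵢ xᵢ` on `{-1,1}^n`. -/
def lin (n : ℕ) (a : Fin n → ℝ) (x : Fin n → Bool) : ℝ := ∑ i, a i * sgn1 (x i)

/-- The halfspace `1{a · x > t}` as a 0/1-valued function. -/
def halfspace (n : ℕ) (a : Fin n → ℝ) (t : ℝ) (x : Fin n → Bool) : ℝ :=
  if t < lin n a x then 1 else 0

/-- The influence of coordinate `i` on `f`: the probability that flipping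
coordinate `i` changes the value of `f`. -/
def infl (n : ℕ) (i : Fin n) (f : (Fin n → Bool) → ℝ) : ℝ :=
  cubePr n (fun x => f x ≠ f (Function.update x i (!x i)))

/-- The degree-1 Fourier coefficient `f̂({i}) = E[f(x)·xᵢ]`. -/
def fCoeff (n : ℕ) (f : (Fin n → Bool) → ℝ) (i : Fin n) : ℝ :=
  cubeE n (fun x => f x * sgn1 (x i))

/-- The degree-1 Fourier weight `W¹(f) = ∑ᵢ f̂({i})²`. -/
def W1 (n : ℕ) (f : (Fin n → Bool) → ℝ) : ℝ := ∑ i, (fCoeff n f i) ^ 2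

/-!
Let `L = ∑ f̂({i}) xᵢ` and `W = W¹(f)`, so that `Cov(f, L) = W`. Truncating `L` to `[-T, T]` gives a
function which is, up to a constant, the integral over `t ∈ [-T, T]` of the halfspaces `1{L > t}`;
hence some halfspace has covariance with `f` at least `Cov(f, clamp L) / 2T`. As `L` is subgaussian
with variance `W`, Cauchy–Schwarz bounds the loss `Cov(f, L - clamp L)` by
`(2W / T) exp(-T² / 4W)`. For `T = 2 √(W log(e / W))` this is at most `W / 2`, because
`W ≤ E[f²] ≤ 1` by Bessel's inequality.
-/

open scoped BigOperators
open Fintype (balance)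

section Truncation

/-- The truncation of `u` to the interval `[a, b]`, meant for `a ≤ b`. -/
def clamp (a b u : ℝ) : ℝ := max a (min b u)

lemma intervalIntegrable_ite_lt (a b u : ℝ) :
    IntervalIntegrable (fun t => if t < u then (1 : ℝ) else 0) MeasureTheory.volume a b := by
  refine Antitone.intervalIntegrable fun s t hst => ?_
  split_ifs <;> linarith

lemma integral_ite_lt {a b : ℝ} (hab : a ≤ b) (u : ℝ) :
    ∫ t in a..b, (if t < u then (1 : ℝ) else 0) = clamp a b u - a := by
  have inter_eq : (Set.Iic u ∩ Set.Ioc a b : Set ℝ) = Set.Ioc a (min b u) := by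
    rw [Set.inter_comm, Set.Ioc_inter_Iic]
  calc ∫ t in a..b, (if t < u then (1 : ℝ) else 0)
      = ∫ t in Set.Ioc a b, (Set.Iio u).indicator 1 t := by
        rw [intervalIntegral.integral_of_le hab]
        rfl
    _ = (MeasureTheory.volume.restrict (Set.Ioc a b)).real (Set.Iio u) :=
        MeasureTheory.integral_indicator_one measurableSet_Iio
    _ = (MeasureTheory.volume.restrict (Set.Ioc a b)).real (Set.Iic u) :=
        MeasureTheory.measureReal_congr MeasureTheory.Iio_ae_eq_Iic
    _ = clamp a b u - a := by
        rw [MeasureTheory.measureReal_restrict_apply measurableSet_Iic, inter_eq,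
          Real.volume_real_Ioc, clamp, ← max_sub_sub_right, sub_self, max_comm]

lemma abs_sub_clamp_neg_self {T : ℝ} (hT : 0 ≤ T) (u : ℝ) :
    |u - clamp (-T) T u| = max (|u| - T) 0 := by
  unfold clamp
  grind

lemma sq_sub_clamp_neg_self_le {T r : ℝ} (hT : 0 ≤ T) (hr : 0 < r) (u : ℝ) :
    (u - clamp (-T) T u) ^ 2 ≤ 4 / r ^ 2 * Real.exp (-(r * T)) * Real.cosh (r * u) := by
  rw [← sq_abs, abs_sub_clamp_neg_self hT]
  rcases le_total |u| T with inside | outside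
  · rw [max_eq_right (sub_nonpos.mpr inside), zero_pow two_ne_zero]
    positivity
  · have sq_le_exp : (r * (|u| - T)) ^ 2 ≤ 2 * Real.exp (r * (|u| - T)) := by
      have excess_nonneg : 0 ≤ r * (|u| - T) := mul_nonneg hr.le (sub_nonneg.mpr outside)
      linarith [Real.quadratic_le_exp_of_nonneg excess_nonneg]
    have exp_abs_le_cosh : Real.exp (r * |u|) ≤ 2 * Real.cosh (r * u) := by
      have := Real.exp_abs_le (r * u)
      rw [abs_mul, abs_of_pos hr] at this
      linarith [Real.cosh_eq (r * u)]
    rw [max_eq_left (sub_nonneg.mpr outside)]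
    calc (|u| - T) ^ 2 = (r * (|u| - T)) ^ 2 / r ^ 2 := by field_simp
      _ ≤ 2 * Real.exp (r * (|u| - T)) / r ^ 2 := by gcongr
      _ = 2 / r ^ 2 * Real.exp (-(r * T)) * Real.exp (r * |u|) := by
          rw [show r * (|u| - T) = -(r * T) + r * |u| by ring, Real.exp_add]
          ring
      _ ≤ 2 / r ^ 2 * Real.exp (-(r * T)) * (2 * Real.cosh (r * u)) := by gcongr
      _ = 4 / r ^ 2 * Real.exp (-(r * T)) * Real.cosh (r * u) := by ring

end Truncation

section UniformCovariance

variable {ι : Type*} [Fintype ι]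

/-- The covariance of two real functions on a finite set carrying the uniform distribution. -/
def uniformCov (F G : ι → ℝ) : ℝ := 𝔼 x, F x * G x - (𝔼 x, F x) * 𝔼 x, G x

lemma uniformCov_eq_expect_balance_mul (F G : ι → ℝ) :
    uniformCov F G = 𝔼 x, balance F x * G x := by
  simp only [uniformCov, Fintype.balance_apply, sub_mul, expect_sub_distrib, mul_expect]

lemma uniformCov_sub_right (F G H : ι → ℝ) :
    uniformCov F (G - H) = uniformCov F G - uniformCov F H := by
  simp only [uniformCov_eq_expect_balance_mul, Pi.sub_apply, mul_sub, expect_sub_distrib]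

lemma expect_sq_balance_le (F : ι → ℝ) : 𝔼 x, balance F x ^ 2 ≤ 𝔼 x, F x ^ 2 := by
  have expand : 𝔼 x, F x ^ 2 = 𝔼 x, (balance F x ^ 2 + (𝔼 y, F y) ^ 2) := by
    have cross : 𝔼 x, balance F x * (2 * 𝔼 y, F y) = 0 := by
      rw [← expect_mul, Fintype.expect_balance, zero_mul]
    rw [← add_zero (𝔼 x, (balance F x ^ 2 + (𝔼 y, F y) ^ 2)), ← cross, ← expect_add_distrib]
    refine expect_congr rfl fun x _ => ?_
    rw [Fintype.balance_apply]
    ring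
  rw [expand]
  exact expect_le_expect fun x _ => le_add_of_nonneg_right (sq_nonneg _)

lemma sq_uniformCov_le (F G : ι → ℝ) :
    uniformCov F G ^ 2 ≤ (𝔼 x, F x ^ 2) * 𝔼 x, G x ^ 2 := by
  rw [uniformCov_eq_expect_balance_mul]
  calc (𝔼 x, balance F x * G x) ^ 2
      ≤ (𝔼 x, balance F x ^ 2) * 𝔼 x, G x ^ 2 := expect_mul_sq_le_sq_mul_sq _ _ _
    _ ≤ (𝔼 x, F x ^ 2) * 𝔼 x, G x ^ 2 :=
        mul_le_mul_of_nonneg_right (expect_sq_balance_le F)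
          (expect_nonneg fun x _ => sq_nonneg (G x))

lemma intervalIntegrable_uniformCov_ite_lt (F L : ι → ℝ) (a b : ℝ) :
    IntervalIntegrable (fun t => uniformCov F (fun x => if t < L x then 1 else 0))
      MeasureTheory.volume a b := by
  simp only [uniformCov_eq_expect_balance_mul, Fintype.expect_eq_sum_div_card]
  refine IntervalIntegrable.div_const ?_ _
  simpa only [Finset.sum_fn] using IntervalIntegrable.sum univ fun x _ =>
    (intervalIntegrable_ite_lt a b (L x)).const_mul (balance F x)

lemma integral_uniformCov_ite_lt {a b : ℝ} (hab : a ≤ b) (F L : ι → ℝ) :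
    ∫ t in a..b, uniformCov F (fun x => if t < L x then 1 else 0) =
      uniformCov F (fun x => clamp a b (L x)) := by
  simp only [uniformCov_eq_expect_balance_mul, Fintype.expect_eq_sum_div_card,
    intervalIntegral.integral_div]
  rw [intervalIntegral.integral_finsetSum fun x _ =>
    (intervalIntegrable_ite_lt a b (L x)).const_mul (balance F x)]
  simp only [intervalIntegral.integral_const_mul, integral_ite_lt hab, mul_sub, sum_sub_distrib,
    ← sum_mul, Fintype.sum_balance, zero_mul, sub_zero]

lemma exists_uniformCov_clamp_le {a b : ℝ} (hab : a < b) (F L : ι → ℝ) :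
    ∃ t, uniformCov F (fun x => clamp a b (L x)) ≤
      (b - a) * uniformCov F (fun x => if t < L x then 1 else 0) := by
  have volume_pos : MeasureTheory.volume (Set.uIoc a b) ≠ 0 := by
    simp [Set.uIoc_of_le hab.le, hab]
  have volume_finite : MeasureTheory.volume (Set.uIoc a b) ≠ ⊤ := by
    simp [Set.uIoc_of_le hab.le]
  obtain ⟨t, -, average_le⟩ := MeasureTheory.exists_setAverage_le volume_pos volume_finite
    (intervalIntegrable_iff.mp (intervalIntegrable_uniformCov_ite_lt F L a b))
  rw [interval_average_eq_div, integral_uniformCov_ite_lt hab.le,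
    div_le_iff₀' (sub_pos.mpr hab)] at average_le
  exact ⟨t, average_le⟩

end UniformCovariance

section LinearForms

variable {n : ℕ}

lemma cubeE_eq_expect (f : (Fin n → Bool) → ℝ) : cubeE n f = 𝔼 x, f x := by
  simp [cubeE, Fintype.expect_eq_sum_div_card]

lemma fCoeff_eq_expect (f : (Fin n → Bool) → ℝ) (i : Fin n) :
    fCoeff n f i = 𝔼 x, f x * sgn1 (x i) :=
  cubeE_eq_expect _

lemma cubeE_mul_sub_eq_uniformCov (f g : (Fin n → Bool) → ℝ) :
    cubeE n (fun x => f x * g x) - cubeE n f * cubeE n g = uniformCov f g := by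
  simp only [cubeE_eq_expect, uniformCov]

lemma cubeE_sq_le_one_of_boolean {f : (Fin n → Bool) → ℝ} (hf : ∀ x, f x = 0 ∨ f x = 1) :
    cubeE n (fun x => f x ^ 2) ≤ 1 := by
  rw [cubeE_eq_expect]
  refine expect_le univ_nonempty fun x _ => ?_
  rcases hf x with h | h <;> norm_num [h]

lemma sgn1_not (b : Bool) : sgn1 (!b) = -sgn1 b := by
  cases b <;> simp [sgn1]

lemma sgn1_mul_self (b : Bool) : sgn1 b * sgn1 b = 1 := by
  cases b <;> simp [sgn1]

lemma expect_eq_zero_of_flip_eq_neg {F : (Fin n → Bool) → ℝ} (i : Fin n)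
    (hF : ∀ x, F (Function.update x i (!x i)) = -F x) : 𝔼 x, F x = 0 := by
  have flip_involutive :
      Function.Involutive fun x : Fin n → Bool => Function.update x i (!x i) := by
    intro x
    simp
  have expect_eq_neg : 𝔼 x, -F x = 𝔼 x, F x :=
    Fintype.expect_bijective _ flip_involutive.bijective _ _ fun x => (hF x).symm
  rw [expect_neg_distrib] at expect_eq_neg
  linarith

lemma expect_sgn1 (i : Fin n) : 𝔼 x : Fin n → Bool, sgn1 (x i) = 0 :=
  expect_eq_zero_of_flip_eq_neg i fun x => by
    rw [Function.update_self, sgn1_not]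

lemma expect_sgn1_mul_sgn1 (i j : Fin n) :
    𝔼 x : Fin n → Bool, sgn1 (x i) * sgn1 (x j) = if i = j then 1 else 0 := by
  split_ifs with hij
  · subst hij
    simp only [sgn1_mul_self, Fintype.expect_one]
  · refine expect_eq_zero_of_flip_eq_neg i fun x => ?_
    rw [Function.update_self, Function.update_of_ne (Ne.symm hij), sgn1_not, neg_mul]

lemma expect_mul_lin (f : (Fin n → Bool) → ℝ) (a : Fin n → ℝ) :
    𝔼 x, f x * lin n a x = ∑ i, a i * fCoeff n f i := by
  simp only [lin, mul_sum, expect_sum_comm, fCoeff_eq_expect, mul_expect, mul_left_comm]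

lemma expect_lin (a : Fin n → ℝ) : 𝔼 x, lin n a x = 0 := by
  simp only [lin, expect_sum_comm, ← mul_expect, expect_sgn1, mul_zero, sum_const_zero]

lemma fCoeff_lin (a : Fin n → ℝ) (i : Fin n) : fCoeff n (lin n a) i = a i := by
  simp only [fCoeff_eq_expect, lin, sum_mul, mul_assoc, expect_sum_comm, ← mul_expect,
    expect_sgn1_mul_sgn1, mul_ite, mul_one, mul_zero, sum_ite_eq', mem_univ, if_true]

lemma expect_sq_lin (a : Fin n → ℝ) : 𝔼 x, lin n a x ^ 2 = ∑ i, a i ^ 2 := by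
  simp only [sq, expect_mul_lin, fCoeff_lin]

lemma expect_mul_lin_fCoeff (f : (Fin n → Bool) → ℝ) :
    𝔼 x, f x * lin n (fCoeff n f) x = W1 n f := by
  simp only [expect_mul_lin, W1, sq]

lemma uniformCov_lin_fCoeff (f : (Fin n → Bool) → ℝ) :
    uniformCov f (lin n (fCoeff n f)) = W1 n f := by
  rw [uniformCov, expect_lin, mul_zero, sub_zero, expect_mul_lin_fCoeff]

lemma W1_le_expect_sq (f : (Fin n → Bool) → ℝ) : W1 n f ≤ 𝔼 x, f x ^ 2 := by
  have residual : 𝔼 x, (f x - lin n (fCoeff n f) x) ^ 2 = 𝔼 x, f x ^ 2 - W1 n f := by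
    simp only [sub_sq, expect_add_distrib, expect_sub_distrib, mul_assoc, ← mul_expect,
      expect_mul_lin_fCoeff, expect_sq_lin]
    rw [← W1]
    ring
  have residual_nonneg : 0 ≤ 𝔼 x, (f x - lin n (fCoeff n f) x) ^ 2 :=
    expect_nonneg fun x _ => sq_nonneg _
  linarith

end LinearForms

section SubgaussianTail

lemma expect_prod_eq_prod_expect {ι : Type*} {κ : ι → Type*} [Fintype ι] [DecidableEq ι]
    [∀ i, Fintype (κ i)] (g : ∀ i, κ i → ℝ) : 𝔼 x : ∀ i, κ i, ∏ i, g i (x i) = ∏ i, 𝔼 b, g i b := by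
  simp only [Fintype.expect_eq_sum_div_card, prod_div_distrib, Fintype.prod_sum, Fintype.card_pi,
    Nat.cast_prod]

variable {n : ℕ}

lemma lin_smul (r : ℝ) (a : Fin n → ℝ) (x : Fin n → Bool) : lin n (r • a) x = r * lin n a x := by
  simp only [lin, Pi.smul_apply, smul_eq_mul, mul_assoc, mul_sum]

lemma lin_neg (a : Fin n → ℝ) (x : Fin n → Bool) : lin n (-a) x = -lin n a x := by
  simp only [lin, Pi.neg_apply, neg_mul, sum_neg_distrib]

lemma expect_exp_lin (a : Fin n → ℝ) :
    𝔼 x, Real.exp (lin n a x) = ∏ i, Real.cosh (a i) := by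
  have factor (i : Fin n) : 𝔼 b, Real.exp (a i * sgn1 b) = Real.cosh (a i) := by
    rw [Fintype.expect_eq_sum_div_card, Fintype.sum_bool, Fintype.card_bool, Real.cosh_eq]
    simp [sgn1]
  simp only [lin, Real.exp_sum]
  rw [expect_prod_eq_prod_expect fun i b => Real.exp (a i * sgn1 b)]
  simp only [factor]

lemma expect_cosh_lin (a : Fin n → ℝ) :
    𝔼 x, Real.cosh (lin n a x) = ∏ i, Real.cosh (a i) := by
  simp only [Real.cosh_eq (lin n a _), ← lin_neg, ← expect_div, expect_add_distrib,
    expect_exp_lin, Pi.neg_apply, Real.cosh_neg, add_self_div_two]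

lemma expect_cosh_lin_le (a : Fin n → ℝ) :
    𝔼 x, Real.cosh (lin n a x) ≤ Real.exp ((∑ i, a i ^ 2) / 2) := by
  rw [expect_cosh_lin, sum_div, Real.exp_sum]
  exact prod_le_prod (fun i _ => (Real.cosh_pos _).le) fun i _ => Real.cosh_le_exp_half_sq _

-- The exponent `r * T - r ^ 2 * v / 2` of the Chernoff bound is largest at `r = T / v`.
lemma expect_sq_lin_sub_clamp_le {a : Fin n → ℝ} {v T : ℝ} (hv : 0 < v)
    (ha : ∑ i, a i ^ 2 = v) (hT : 0 < T) :
    𝔼 x, (lin n a x - clamp (-T) T (lin n a x)) ^ 2 ≤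
      (2 * v / T) ^ 2 * Real.exp (-(T ^ 2 / (2 * v))) := by
  set r := T / v with hr
  have hr_pos : 0 < r := by positivity
  have cosh_le : 𝔼 x, Real.cosh (r * lin n a x) ≤ Real.exp (T ^ 2 / (2 * v)) := by
    have sum_sq : (∑ i, (r • a) i ^ 2) / 2 = T ^ 2 / (2 * v) := by
      simp only [Pi.smul_apply, smul_eq_mul, mul_pow, ← mul_sum, ha, hr]
      field_simp
    simpa only [lin_smul, sum_sq] using expect_cosh_lin_le (r • a)
  calc 𝔼 x, (lin n a x - clamp (-T) T (lin n a x)) ^ 2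
      ≤ 𝔼 x, 4 / r ^ 2 * Real.exp (-(r * T)) * Real.cosh (r * lin n a x) :=
        expect_le_expect fun x _ => sq_sub_clamp_neg_self_le hT.le hr_pos _
    _ = 4 / r ^ 2 * Real.exp (-(r * T)) * 𝔼 x, Real.cosh (r * lin n a x) := by rw [mul_expect]
    _ ≤ 4 / r ^ 2 * Real.exp (-(r * T)) * Real.exp (T ^ 2 / (2 * v)) := by gcongr
    _ = 4 / r ^ 2 * Real.exp (-(T ^ 2 / (2 * v))) := by
        rw [mul_assoc, ← Real.exp_add, hr]
        congr 2
        field_simp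
        ring
    _ = (2 * v / T) ^ 2 * Real.exp (-(T ^ 2 / (2 * v))) := by
        rw [hr]
        field_simp
        ring

end SubgaussianTail

section Correlation

variable {n : ℕ} {f : (Fin n → Bool) → ℝ}

lemma one_le_log_exp_one_div {w : ℝ} (hw : 0 < w) (hw_le : w ≤ 1) :
    1 ≤ Real.log (Real.exp 1 / w) := by
  rw [Real.log_div (Real.exp_pos 1).ne' hw.ne', Real.log_exp]
  linarith [Real.log_nonpos hw.le hw_le]

lemma exp_neg_log_exp_one_div {w : ℝ} (hw : 0 < w) :
    Real.exp (-Real.log (Real.exp 1 / w)) = w / Real.exp 1 := by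
  rw [Real.exp_neg, Real.exp_log (by positivity), inv_div]

lemma uniformCov_lin_sub_clamp_le {a : Fin n → ℝ} {v T : ℝ} (hf : 𝔼 x, f x ^ 2 ≤ 1)
    (hv : 0 < v) (ha : ∑ i, a i ^ 2 = v) (hT : 0 < T) :
    uniformCov f (fun x => lin n a x - clamp (-T) T (lin n a x)) ≤
      2 * v / T * Real.exp (-(T ^ 2 / (4 * v))) := by
  set G := fun x => lin n a x - clamp (-T) T (lin n a x)
  have expect_sq_nonneg : 0 ≤ 𝔼 x, G x ^ 2 := expect_nonneg fun x _ => sq_nonneg _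
  refine le_of_abs_le (abs_le_of_sq_le_sq ?_ (by positivity))
  calc uniformCov f G ^ 2
      ≤ (𝔼 x, f x ^ 2) * 𝔼 x, G x ^ 2 := sq_uniformCov_le f G
    _ ≤ 𝔼 x, G x ^ 2 := mul_le_of_le_one_left expect_sq_nonneg hf
    _ ≤ (2 * v / T) ^ 2 * Real.exp (-(T ^ 2 / (2 * v))) := expect_sq_lin_sub_clamp_le hv ha hT
    _ = (2 * v / T * Real.exp (-(T ^ 2 / (4 * v)))) ^ 2 := by
        rw [mul_pow, ← Real.exp_nat_mul]
        congr 2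
        push_cast
        field_simp
        norm_num

lemma W1_sub_le_uniformCov_clamp {T : ℝ} (hf : 𝔼 x, f x ^ 2 ≤ 1) (hW : 0 < W1 n f)
    (hT : 0 < T) :
    W1 n f - 2 * W1 n f / T * Real.exp (-(T ^ 2 / (4 * W1 n f))) ≤
      uniformCov f (fun x => clamp (-T) T (lin n (fCoeff n f) x)) := by
  have loss_le := uniformCov_lin_sub_clamp_le hf hW rfl hT
  have loss_eq := uniformCov_sub_right f (lin n (fCoeff n f))
    fun x => clamp (-T) T (lin n (fCoeff n f) x)
  rw [uniformCov_lin_fCoeff] at loss_eq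
  exact sub_le_comm.mp (loss_eq ▸ loss_le)

-- At the level `T = 2 * l * s` the truncation error is `s * exp (-l) = s * w / e ≤ w / 2`.
lemma half_le_sub_truncation_error {w l s : ℝ} (hw : 0 < w) (hl : l = Real.log (Real.exp 1 / w))
    (hs : 0 < s) (hs_one : s ≤ 1) (hws : w = l * s ^ 2) :
    w / 2 ≤ w - 2 * w / (2 * l * s) * Real.exp (-((2 * l * s) ^ 2 / (4 * w))) := by
  have hl_pos : 0 < l := pos_of_mul_pos_left (hws ▸ hw) (sq_nonneg s)
  have prefactor : 2 * w / (2 * l * s) = s := by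
    rw [hws]
    field_simp
  have exponent : (2 * l * s) ^ 2 / (4 * w) = l := by
    rw [hws]
    field_simp
    norm_num
  have error_le : s * (w / Real.exp 1) ≤ 1 * (w / 2) := by
    have two_le_exp : 2 ≤ Real.exp 1 := by linarith [Real.add_one_le_exp (1 : ℝ)]
    gcongr
  rw [prefactor, exponent, hl, exp_neg_log_exp_one_div hw]
  linarith

theorem correlation_with_halfspace_general (hf : cubeE n (fun x => f x ^ 2) ≤ 1)
    (hW : 0 < W1 n f) :
    ∃ t : ℝ,
      1 / 8 * Real.sqrt (W1 n f / Real.log (Real.exp 1 / W1 n f)) ≤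
        cubeE n (fun x => f x * halfspace n (fCoeff n f) t x) -
          cubeE n f * cubeE n (halfspace n (fCoeff n f) t) := by
  rw [cubeE_eq_expect] at hf
  have hW_one : W1 n f ≤ 1 := (W1_le_expect_sq f).trans hf
  set l := Real.log (Real.exp 1 / W1 n f) with hl
  have hl_one : 1 ≤ l := one_le_log_exp_one_div hW hW_one
  set s := Real.sqrt (W1 n f / l)
  have hs : 0 < s := Real.sqrt_pos.mpr (by positivity)
  have hs_one : s ≤ 1 := Real.sqrt_le_one.mpr (div_le_one_of_le₀ (by linarith) (by linarith))
  have hWs : W1 n f = l * s ^ 2 := by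
    rw [Real.sq_sqrt (by positivity)]
    field_simp
  obtain ⟨t, ht⟩ := exists_uniformCov_clamp_le (neg_lt_self (by positivity : 0 < 2 * l * s)) f
    (lin n (fCoeff n f))
  refine ⟨t, ?_⟩
  have cov_ge : W1 n f / 2 ≤ 4 * l * s * uniformCov f (halfspace n (fCoeff n f) t) :=
    calc W1 n f / 2
        ≤ W1 n f - 2 * W1 n f / (2 * l * s) * Real.exp (-((2 * l * s) ^ 2 / (4 * W1 n f))) :=
          half_le_sub_truncation_error hW hl hs hs_one hWs
      _ ≤ uniformCov f (fun x => clamp (-(2 * l * s)) (2 * l * s) (lin n (fCoeff n f) x)) :=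
          W1_sub_le_uniformCov_clamp hf hW (by positivity)
      _ ≤ (2 * l * s - -(2 * l * s)) * uniformCov f (halfspace n (fCoeff n f) t) := ht
      _ = 4 * l * s * uniformCov f (halfspace n (fCoeff n f) t) := by ring
  rw [cubeE_mul_sub_eq_uniformCov]
  refine le_of_mul_le_mul_left ?_ (by positivity : 0 < 4 * l * s)
  linarith

end Correlation

/-- **Correlation with a halfspace.** There is a universal `c > 0` such that any
Boolean function `f : {-1,1}ⁿ → {0,1}` with `W¹(f) > 0` has a halfspace
`g(x) = 1{∑ f̂({i})xᵢ > t}` with `Cov(f,g) ≥ c·√(W¹(f)/log(e/W¹(f)))`. -/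
theorem correlation_with_halfspace :
    ∃ c : ℝ, 0 < c ∧ ∀ (n : ℕ) (f : (Fin n → Bool) → ℝ),
      (∀ x, f x = 0 ∨ f x = 1) → 0 < W1 n f →
      ∃ t : ℝ,
        c * Real.sqrt (W1 n f / Real.log (Real.exp 1 / W1 n f)) ≤
          cubeE n (fun x => f x * halfspace n (fCoeff n f) t x) -
            cubeE n f * cubeE n (halfspace n (fCoeff n f) t) := by
  exact ⟨1 / 8, by norm_num, fun n f hf hW =>
    correlation_with_halfspace_general (cubeE_sq_le_one_of_boolean hf) hW⟩

end
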